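/- One has E(2) = 1/2, and there exists a constant K > 0 such that for every β with 2 < β < 3, |E(β) − 1/2| ≤ K·(β − 2)·(1 + |log(β − 2)|). -/

import Mathlib

/-- The orbit of `1` under the β-map `T_β(x) = βx mod 1`: `t₀ = 1`,
`t_{n+1} = β t_n − ⌊β t_n⌋`. -/
noncomputable def betaOrbit (β : ℝ) : ℕ → ℝ
  | 0 => 1
  | n + 1 => Int.fract (β * betaOrbit β n)

/-- `E(β) = (∑ t_n(β)²/(2βⁿ)) / (∑ t_n(β)/βⁿ)`, the expectation of the unique acim of
the β-map. -/
noncomputable def Ebeta (β : ℝ) : ℝ :=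
  (∑' n : ℕ, (betaOrbit β n) ^ 2 / (2 * β ^ n)) / (∑' n : ℕ, betaOrbit β n / β ^ n)

lemma bo_mem (β : ℝ) (n : ℕ) : 0 ≤ betaOrbit β n ∧ betaOrbit β n ≤ 1 := by
  cases n with
  | zero => simp [betaOrbit]
  | succ n => exact ⟨Int.fract_nonneg _, (Int.fract_lt_one _).le⟩

lemma bo_le {β : ℝ} (h2 : 2 < β) (h3 : β < 3) (n : ℕ) :
    betaOrbit β (n+1) ≤ β ^ n * (β - 2) := by
  induction n with
  | zero =>
    have : ⌊β⌋ = 2 := by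
      rw [Int.floor_eq_iff]; constructor <;> push_cast <;> linarith
    simp [betaOrbit, Int.fract, this]
  | succ n ih =>
    have h0 := (bo_mem β (n+1)).1
    have hp : 0 ≤ β * betaOrbit β (n+1) := mul_nonneg (by linarith) h0
    have hf : (0:ℤ) ≤ ⌊β * betaOrbit β (n+1)⌋ := Int.floor_nonneg.2 hp
    have hf' : (0:ℝ) ≤ (⌊β * betaOrbit β (n+1)⌋ : ℝ) := by exact_mod_cast hf
    have h1 : betaOrbit β (n+1+1) ≤ β * betaOrbit β (n+1) := by
      change Int.fract (β * betaOrbit β (n+1)) ≤ _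
      unfold Int.fract; linarith
    calc _ ≤ _ := h1
      _ ≤ β * (β ^ n * (β - 2)) := by gcongr
      _ = _ := by ring

lemma bo_two (n : ℕ) : betaOrbit 2 (n+1) = 0 := by
  induction n with
  | zero => simp [betaOrbit]
  | succ n ih =>
    change Int.fract (2 * betaOrbit 2 (n+1)) = 0
    rw [ih]; simp

lemma a_nonneg {β : ℝ} (h2 : 2 < β) (n : ℕ) : 0 ≤ betaOrbit β n / β ^ n :=
  div_nonneg (bo_mem β n).1 (by positivity)

lemma a_le_geo {β : ℝ} (h2 : 2 < β) (n : ℕ) : betaOrbit β n / β ^ n ≤ (1/2) ^ n := by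
  rw [div_pow, one_pow]
  have := (bo_mem β n).2
  gcongr

lemma a_le_eps {β : ℝ} (h2 : 2 < β) (h3 : β < 3) (n : ℕ) :
    betaOrbit β (n+1) / β ^ (n+1) ≤ (β - 2) / 2 := by
  have hp : 0 < β ^ n := by positivity
  rw [div_le_div_iff₀ (by positivity) (by norm_num)]
  have := bo_le h2 h3 n
  have h4 : 0 ≤ β ^ n * (β - 2) := mul_nonneg hp.le (by linarith)
  calc _ ≤ (β ^ n * (β - 2)) * 2 := by gcongr
    _ ≤ (β ^ n * (β - 2)) * β := by gcongr
    _ = _ := by ring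

lemma a_summable {β : ℝ} (h2 : 2 < β) : Summable fun n => betaOrbit β n / β ^ n :=
  Summable.of_nonneg_of_le (a_nonneg h2) (a_le_geo h2) summable_geometric_two

lemma b_nonneg {β : ℝ} (h2 : 2 < β) (n : ℕ) : 0 ≤ betaOrbit β n ^ 2 / (2 * β ^ n) := by
  positivity

lemma b_le {β : ℝ} (h2 : 2 < β) (n : ℕ) :
    betaOrbit β n ^ 2 / (2 * β ^ n) ≤ (1/2) * (betaOrbit β n / β ^ n) := by
  have e : betaOrbit β n ^ 2 / (2 * β ^ n) = (1/2) * (betaOrbit β n ^ 2 / β ^ n) := by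
    field_simp
  rw [e]
  obtain ⟨h0, h1⟩ := bo_mem β n
  have : betaOrbit β n ^ 2 ≤ betaOrbit β n := by nlinarith
  gcongr

lemma b_summable {β : ℝ} (h2 : 2 < β) : Summable fun n => betaOrbit β n ^ 2 / (2 * β ^ n) :=
  Summable.of_nonneg_of_le (b_nonneg h2) (b_le h2) ((a_summable h2).mul_left _)

lemma A_bound {β : ℝ} (h2 : 2 < β) (h3 : β < 3) (N : ℕ) :
    ∑' n : ℕ, betaOrbit β (n+1) / β ^ (n+1) ≤ N * ((β - 2) / 2) + (1/2)^N := by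
  have hs := (summable_nat_add_iff 1).2 (a_summable h2)
  rw [← hs.sum_add_tsum_nat_add N]
  have h1 : ∑ i ∈ Finset.range N, betaOrbit β (i+1) / β ^ (i+1) ≤ N * ((β - 2) / 2) := by
    have := Finset.sum_le_card_nsmul (Finset.range N)
      (fun i => betaOrbit β (i+1) / β ^ (i+1)) _ (fun i _ => a_le_eps h2 h3 i)
    simpa using this
  have h2' : ∑' i : ℕ, betaOrbit β (i+N+1) / β ^ (i+N+1) ≤ (1/2)^N := by
    have hg : HasSum (fun i : ℕ => ((1:ℝ)/2)^(N+1) * (1/2)^i) ((1/2)^(N+1) * 2) :=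
      hasSum_geometric_two.mul_left _
    calc _ ≤ ∑' i : ℕ, ((1:ℝ)/2)^(N+1) * (1/2)^i := by
          refine Summable.tsum_le_tsum (fun i => ?_) ((summable_nat_add_iff N).2 hs) hg.summable
          refine (a_le_geo h2 (i+N+1)).trans (le_of_eq ?_)
          ring
      _ = _ := by rw [hg.tsum_eq]; ring
  exact add_le_add h1 h2'

lemma main_bound {β : ℝ} (h2 : 2 < β) (h3 : β < 3) :
    |Ebeta β - 1/2| ≤ ∑' n : ℕ, betaOrbit β (n+1) / β ^ (n+1) := by
  have hsa := (summable_nat_add_iff 1).2 (a_summable h2)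
  have hsb := (summable_nat_add_iff 1).2 (b_summable h2)
  unfold Ebeta
  rw [(a_summable h2).tsum_eq_zero_add, (b_summable h2).tsum_eq_zero_add]
  have hA : 0 ≤ ∑' n : ℕ, betaOrbit β (n+1) / β ^ (n+1) :=
    tsum_nonneg fun n => a_nonneg h2 _
  have hB : 0 ≤ ∑' n : ℕ, betaOrbit β (n+1) ^ 2 / (2 * β ^ (n+1)) :=
    tsum_nonneg fun n => b_nonneg h2 _
  have hBA : ∑' n : ℕ, betaOrbit β (n+1) ^ 2 / (2 * β ^ (n+1)) ≤
      1/2 * ∑' n : ℕ, betaOrbit β (n+1) / β ^ (n+1) := by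
    rw [← tsum_mul_left]
    exact Summable.tsum_le_tsum (fun n => b_le h2 _) hsb (hsa.mul_left _)
  generalize (∑' n : ℕ, betaOrbit β (n+1) / β ^ (n+1)) = A at *
  generalize (∑' n : ℕ, betaOrbit β (n+1) ^ 2 / (2 * β ^ (n+1))) = B at *
  have e0 : betaOrbit β 0 = 1 := rfl
  rw [e0]
  have hp : 0 < 1 + A := by linarith
  have e : (1 ^ 2 / (2 * β ^ 0) + B) / (1 / β ^ 0 + A) - 1/2 = (B - A/2) / (1 + A) := by
    simp only [pow_zero, div_one, mul_one, one_pow]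
    field_simp
    ring
  rw [e, abs_div, abs_of_pos hp, abs_of_nonpos (by linarith), div_le_iff₀ hp]
  nlinarith

/-- Log-Lipschitz continuity of `β ↦ E(β)` at `β = 2`. -/
theorem stmt3 :
    Ebeta 2 = 1/2 ∧
    ∃ K > (0:ℝ), ∀ β : ℝ, 2 < β → β < 3 →
      |Ebeta β - 1/2| ≤ K * (β - 2) * (1 + |Real.log (β - 2)|) := by
  refine ⟨?_, 2, by norm_num, fun β h2 h3 => ?_⟩
  · unfold Ebeta
    rw [tsum_eq_single 0, tsum_eq_single 0]
    · simp [betaOrbit]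
    · intro n hn
      obtain ⟨m, rfl⟩ := Nat.exists_eq_succ_of_ne_zero hn
      simp [bo_two]
    · intro n hn
      obtain ⟨m, rfl⟩ := Nat.exists_eq_succ_of_ne_zero hn
      simp [bo_two]
  · have hε : 0 < β - 2 := by linarith
    have hlog : Real.log (β - 2) ≤ 0 := Real.log_nonpos hε.le (by linarith)
    rw [abs_of_nonpos hlog]
    set L := -Real.log (β - 2) with hL
    have hL0 : 0 ≤ L := by linarith
    have hl2 := Real.log_two_gt_d9
    set N := ⌈L / Real.log 2⌉₊ with hN
    have hq : 0 ≤ L / Real.log 2 := div_nonneg hL0 (by linarith)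
    have hN1 : L / Real.log 2 ≤ N := Nat.le_ceil _
    have hN2 : (N:ℝ) < L / Real.log 2 + 1 := Nat.ceil_lt_add_one hq
    have hq2 : L / Real.log 2 ≤ 2 * L := by
      rw [div_le_iff₀ (by linarith)]; nlinarith
    have hpow : ((1:ℝ)/2)^N ≤ β - 2 := by
      rw [← Real.log_le_log_iff (by positivity) hε, Real.log_pow, one_div, Real.log_inv]
      rw [div_le_iff₀ (by linarith)] at hN1
      linarith
    have h := (main_bound h2 h3).trans (A_bound h2 h3 N)
    have : (N:ℝ) * ((β-2)/2) ≤ (2 * L + 1) * ((β-2)/2) := by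
      apply mul_le_mul_of_nonneg_right <;> linarith
    nlinarith [mul_nonneg hL0 hε.le]
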